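/- For the polytope P = P_{a₁,...,a_{2k-1}} with k ≥ 2, the bigraded Betti numbers of its moment-angle manifold satisfy: β^{0,0} = 1; β^{-1,2j} = #{i : aᵢ+...+a_{i+k-2} = j}; β^{-2,2j} = #{i : aᵢ+...+a_{i+k-1} = j}; β^{-3,2(n+3)} = 1; all other β^{-q,2p} = 0. In particular Σⱼ β^{-1,2j} = Σⱼ β^{-2,2j} = 2k-1. -/

import Mathlib

/-! Bigraded Betti numbers `β^{-q,2p}` of the moment-angle complex of a simplicial
complex `K` on vertex set `Fin N`, defined (following Hochster / the Koszul-type complex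
`Λ[u₁,...,u_N] ⊗ ℚ[K]` of the paper) as the sum over all multidegrees `τ` of cardinality
`p` of the dimension of the `q`-th homology of the multigraded component complex, whose
basis in homological degree `q` consists of the monomials `u_ω v_{τ∖ω}` with `ω ⊆ τ`,
`|ω| = q` and `τ∖ω ∈ K`. -/

/-- The multidegree-`τ`, homological degree `q` component of the complex
`Λ[u] ⊗ ℚ[K]`. -/
abbrev CSpace (N : ℕ) (K : Finset (Finset (Fin N))) (τ : Finset (Fin N)) (q : ℕ) :=
  {ω : Finset (Fin N) // ω ⊆ τ ∧ ω.card = q ∧ τ \ ω ∈ K} → ℚ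

/-- Matrix of the differential `d(u_ω v_σ) = ∑_{i ∈ ω} ± u_{ω∖i} v_{σ∪i}` from degree
`q+1` to degree `q` in multidegree `τ`. -/
noncomputable def diffMat (N : ℕ) (K : Finset (Finset (Fin N))) (τ : Finset (Fin N))
    (q : ℕ) :
    Matrix {ω : Finset (Fin N) // ω ⊆ τ ∧ ω.card = q ∧ τ \ ω ∈ K}
      {ω : Finset (Fin N) // ω ⊆ τ ∧ ω.card = q + 1 ∧ τ \ ω ∈ K} ℚ :=
  fun ω ω' =>
    if ω.1 ⊆ ω'.1 then
      (-1 : ℚ) ^ (ω.1.filter (fun x => ∀ i ∈ ω'.1 \ ω.1, x < i)).card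
    else 0

/-- The differential of the multigraded component complex. -/
noncomputable def diff (N : ℕ) (K : Finset (Finset (Fin N))) (τ : Finset (Fin N))
    (q : ℕ) : CSpace N K τ (q + 1) →ₗ[ℚ] CSpace N K τ q :=
  Matrix.toLin' (diffMat N K τ q)

/-- The cocycles (cycles) in homological degree `q`. -/
noncomputable def cocycles (N : ℕ) (K : Finset (Finset (Fin N))) (τ : Finset (Fin N)) :
    (q : ℕ) → Submodule ℚ (CSpace N K τ q)
  | 0 => ⊤
  | q + 1 => LinearMap.ker (diff N K τ q)

/-- The bigraded Betti number `β^{-q,2p}` of the moment-angle complex of `K`. -/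
noncomputable def bettiNum (N : ℕ) (K : Finset (Finset (Fin N))) (q p : ℕ) : ℕ :=
  ∑ τ ∈ Finset.univ.filter (fun τ : Finset (Fin N) => τ.card = p),
    Module.finrank ℚ
      (↥(cocycles N K τ q) ⧸
        Submodule.comap (cocycles N K τ q).subtype (LinearMap.range (diff N K τ q)))

/-- The boundary complex of the dual of `P_{a₁,...,a_{2k-1}}`: vertices are labeled by
`c : Fin N → ZMod (2k-1)` (with `aᵢ` vertices labeled `i`), and a subset is a face iff it
does not contain all vertices whose labels lie in some arc `{i, i+1, ..., i+k-2}`. -/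
noncomputable def galeComplex (k m' N : ℕ) [NeZero m'] (c : Fin N → ZMod m') :
    Finset (Finset (Fin N)) :=
  Finset.univ.filter (fun σ : Finset (Fin N) =>
    ¬ ∃ i : ZMod m', ∀ x : Fin N, (c x - i).val ≤ k - 2 → x ∈ σ)

section GaleAlgebra

set_option linter.unusedSectionVars false

open Classical in
/-- Sign of inserting `i` in `w`. -/
noncomputable def geps {α : Type} [LinearOrder α] (i : α) (w : Finset α) : ℚ :=
  (-1 : ℚ) ^ (w.filter (fun x => x < i)).card

/-- The full Koszul differential. -/
noncomputable def gd {α : Type} [LinearOrder α] [Fintype α] :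
    (Finset α → ℚ) →ₗ[ℚ] (Finset α → ℚ) where
  toFun z := fun w => ∑ i ∈ wᶜ, geps i w * z (insert i w)
  map_add' x y := by
    funext w
    simp only [Pi.add_apply, mul_add, Finset.sum_add_distrib]
  map_smul' r x := by
    funext w
    simp only [Pi.smul_apply, smul_eq_mul, RingHom.id_apply, Finset.mul_sum]
    exact Finset.sum_congr rfl (fun _ _ => by ring)

open Classical in
/-- Restriction to a family. -/
noncomputable def gcut {α : Type} (F : Finset α → Prop) :
    (Finset α → ℚ) →ₗ[ℚ] (Finset α → ℚ) where
  toFun z := fun w => if F w then z w else 0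
  map_add' x y := by
    funext w
    by_cases h : F w <;> simp [h]
  map_smul' r x := by
    funext w
    by_cases h : F w <;> simp [h]

/-- Functions supported on the `q`-element members of the family. -/
def gsup {α : Type} (F : Finset α → Prop) (q : ℕ) : Submodule ℚ (Finset α → ℚ) where
  carrier := {z | ∀ w, ¬ (F w ∧ w.card = q) → z w = 0}
  zero_mem' := fun _ _ => rfl
  add_mem' := fun {x y} hx hy w hw => by simp [hx w hw, hy w hw]
  smul_mem' := fun r x hx w hw => by simp [hx w hw]

noncomputable def gZ {α : Type} [LinearOrder α] [Fintype α] (F : Finset α → Prop) (q : ℕ) :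
    Submodule ℚ (Finset α → ℚ) :=
  gsup F q ⊓ LinearMap.ker ((gcut F).comp gd)

noncomputable def gB {α : Type} [LinearOrder α] [Fintype α] (F : Finset α → Prop) (q : ℕ) :
    Submodule ℚ (Finset α → ℚ) :=
  (gsup F (q + 1)).map ((gcut F).comp gd)

def gconv {α : Type} (F : Finset α → Prop) : Prop :=
  ∀ u v w : Finset α, u ⊆ v → v ⊆ w → F u → F w → F v

variable {α : Type} [LinearOrder α] [Fintype α]

theorem geps_sq (i : α) (w : Finset α) : geps i w * geps i w = 1 := by
  unfold geps
  rw [← mul_pow]; simp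

theorem geps_swap (i j : α) (w : Finset α) (hi : i ∉ w) (hj : j ∉ w) (hij : i ≠ j) :
    geps i w * geps j (insert i w) = - (geps j w * geps i (insert j w)) := by
  unfold geps
  rw [Finset.filter_insert, Finset.filter_insert]
  rcases lt_or_gt_of_ne hij with h | h
  · rw [if_pos h, if_neg (not_lt.2 h.le), Finset.card_insert_of_notMem (by simp [hi])]
    ring
  · rw [if_neg (not_lt.2 h.le), if_pos h, Finset.card_insert_of_notMem (by simp [hj])]
    ring

theorem geps_swap2 (i j : α) (w : Finset α) (hi : i ∉ w) (hj : j ∉ w) (hij : i ≠ j) :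
    geps i (insert j w) * geps j (insert i w) = - (geps j w * geps i w) := by
  have h := geps_swap i j w hi hj hij
  have h1 := geps_sq i w
  have h2 := geps_sq i (insert j w)
  calc geps i (insert j w) * geps j (insert i w)
      = geps i w * geps i (insert j w) * (geps i w * geps j (insert i w)) := by
        linear_combination (-(geps i (insert j w) * geps j (insert i w))) * h1
    _ = - (geps j w * geps i w) := by
        rw [h]; linear_combination (-(geps j w * geps i w)) * h2

theorem gd_apply (z : Finset α → ℚ) (w : Finset α) :
    gd z w = ∑ i ∈ wᶜ, geps i w * z (insert i w) := rfl

open Classical in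
theorem gcut_apply (F : Finset α → Prop) (z : Finset α → ℚ) (w : Finset α) :
    gcut F z w = if F w then z w else 0 := rfl

theorem gd_gd (z : Finset α → ℚ) (w : Finset α) : gd (gd z) w = 0 := by
  rw [gd_apply]
  simp only [gd_apply, Finset.mul_sum]
  rw [Finset.sum_sigma']
  apply Finset.sum_involution (fun p _ => ⟨p.2, p.1⟩)
  · rintro ⟨i, j⟩ h
    simp only [Finset.mem_sigma, Finset.mem_compl, Finset.mem_insert, not_or] at h
    obtain ⟨hi, hji, hj⟩ := h
    have := geps_swap i j w hi hj (Ne.symm hji)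
    simp only
    rw [Finset.insert_comm j i]
    linear_combination (z (insert i (insert j w))) * this
  · rintro ⟨i, j⟩ h _ he
    simp only [Finset.mem_sigma, Finset.mem_compl, Finset.mem_insert, not_or] at h
    simp only [Sigma.mk.injEq, heq_eq_eq] at he
    exact h.2.1 he.1
  · rintro ⟨i, j⟩ h
    rfl
  · rintro ⟨i, j⟩ h
    simp only [Finset.mem_sigma, Finset.mem_compl, Finset.mem_insert, not_or] at h ⊢
    exact ⟨h.2.2, fun e => h.2.1 e.symm, h.1⟩

/-- Value of `gd` only depends on values on one-step extensions. -/
theorem gd_congr {z z' : Finset α → ℚ} {w : Finset α}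
    (h : ∀ i, i ∉ w → z (insert i w) = z' (insert i w)) : gd z w = gd z' w := by
  rw [gd_apply, gd_apply]
  exact Finset.sum_congr rfl (fun i hi => by rw [h i (by simpa using hi)])

theorem gd_zero {z : Finset α → ℚ} {w : Finset α}
    (h : ∀ i, i ∉ w → z (insert i w) = 0) : gd z w = 0 := by
  rw [gd_apply]
  exact Finset.sum_eq_zero (fun i hi => by rw [h i (by simpa using hi)]; simp)

theorem gd_cut_gd {F : Finset α → Prop} (hF : gconv F) {q : ℕ} {z : Finset α → ℚ}
    (hz : z ∈ gsup F q) {w : Finset α} (hw : F w) : gd (gcut F (gd z)) w = 0 := by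
  rw [← gd_gd z w]
  apply gd_congr
  intro i hi
  rw [gcut_apply]
  split_ifs with h
  · rfl
  · symm
    apply gd_zero
    intro j hj
    apply hz
    rintro ⟨h1, -⟩
    exact h (hF w _ _ (Finset.subset_insert _ _) (Finset.subset_insert _ _) hw h1)

theorem mem_gZ {F : Finset α → Prop} {q : ℕ} {z : Finset α → ℚ} :
    z ∈ gZ F q ↔ z ∈ gsup F q ∧ ∀ w, F w → gd z w = 0 := by
  unfold gZ
  rw [Submodule.mem_inf, LinearMap.mem_ker]
  refine and_congr_right (fun _ => ⟨fun h w hw => ?_, fun h => ?_⟩)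
  · have := congrFun h w
    simpa [gcut_apply, hw] using this
  · funext w
    simp only [LinearMap.comp_apply, gcut_apply]
    split_ifs with hw
    · exact h w hw
    · rfl

theorem mem_gB {F : Finset α → Prop} {q : ℕ} {z : Finset α → ℚ} :
    z ∈ gB F q ↔ ∃ y ∈ gsup F (q + 1), gcut F (gd y) = z := by
  unfold gB
  simp [Submodule.mem_map]

theorem gcut_gd_mem {F : Finset α → Prop} {q : ℕ} {y : Finset α → ℚ}
    (hy : y ∈ gsup F (q + 1)) : gcut F (gd y) ∈ gsup F q := by
  intro w hw
  rw [gcut_apply]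
  split_ifs with h
  · apply gd_zero
    intro i hi
    apply hy
    rintro ⟨-, h2⟩
    rw [Finset.card_insert_of_notMem hi] at h2
    exact hw ⟨h, by omega⟩
  · rfl

theorem gB_le_gZ {F : Finset α → Prop} (hF : gconv F) (q : ℕ) : gB F q ≤ gZ F q := by
  intro z hz
  obtain ⟨y, hy, rfl⟩ := mem_gB.1 hz
  exact mem_gZ.2 ⟨gcut_gd_mem hy, fun w hw => gd_cut_gd hF hy hw⟩

open Classical in
/-- The toggle homotopy. -/
noncomputable def gs (x : α) (z : Finset α → ℚ) : Finset α → ℚ :=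
  fun w => if x ∈ w then geps x (w.erase x) * z (w.erase x) else 0

theorem gs_homotopy (x : α) (z : Finset α → ℚ) (w : Finset α) :
    gd (gs x z) w + gs x (gd z) w = z w := by
  by_cases hx : x ∈ w
  · obtain ⟨v, hv, rfl⟩ : ∃ v, x ∉ v ∧ insert x v = w :=
      ⟨w.erase x, Finset.notMem_erase _ _, Finset.insert_erase hx⟩
    have e1 : gs x (gd z) (insert x v) = geps x v * gd z v := by
      simp [gs, Finset.erase_insert hv]
    have e2 : vᶜ = insert x (insert x v)ᶜ := by
      ext y
      by_cases hy : y = x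
      · subst hy; simp [hv]
      · simp [hy]
    rw [e1, gd_apply, gd_apply, e2, Finset.sum_insert (by simp), mul_add, ← mul_assoc,
      geps_sq, one_mul, add_comm, add_assoc, Finset.mul_sum, ← Finset.sum_add_distrib,
      Finset.sum_eq_zero, add_zero]
    intro i hi
    simp only [Finset.mem_compl, Finset.mem_insert, not_or] at hi
    have hxi : x ∉ insert i v := by
      simp only [Finset.mem_insert, not_or]; exact ⟨fun e => hi.1 e.symm, hv⟩
    have e3 : gs x z (insert i (insert x v)) = geps x (insert i v) * z (insert i v) := by
      rw [Finset.insert_comm]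
      simp only [gs, Finset.mem_insert_self, if_true, Finset.erase_insert hxi]
    rw [e3]
    have := geps_swap2 i x v hi.2 hv hi.1
    linear_combination (z (insert i v)) * this
  · have e1 : gs x (gd z) w = 0 := by simp [gs, hx]
    rw [e1, add_zero, gd_apply, Finset.sum_eq_single_of_mem x (by simpa using hx)]
    · simp only [gs, Finset.mem_insert_self, if_true, Finset.erase_insert hx]
      rw [← mul_assoc, geps_sq, one_mul]
    · intro i hi hix
      simp [gs, hx, Ne.symm hix]

theorem gs_sup {D : Finset α → Prop} {x : α} (hD : ∀ w, x ∉ w → (D w ↔ D (insert x w)))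
    {q : ℕ} {z : Finset α → ℚ} (hz : z ∈ gsup D q) : gs x z ∈ gsup D (q + 1) := by
  intro w hw
  unfold gs
  split_ifs with hx
  · rw [hz, mul_zero]
    rintro ⟨h1, h2⟩
    apply hw
    rw [hD _ (Finset.notMem_erase _ _), Finset.insert_erase hx] at h1
    refine ⟨h1, ?_⟩
    rw [← h2, Finset.card_erase_add_one hx]
  · rfl

/-- Toggle-closed families are acyclic. -/
theorem toggle_acyclic {D : Finset α → Prop} {x : α}
    (hD : ∀ w, x ∉ w → (D w ↔ D (insert x w))) {q : ℕ} {z : Finset α → ℚ}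
    (hz : z ∈ gZ D q) : ∃ y ∈ gsup D (q + 1), gcut D (gd y) = z := by
  obtain ⟨h1, h2⟩ := mem_gZ.1 hz
  refine ⟨gs x z, gs_sup hD h1, ?_⟩
  funext w
  rw [gcut_apply]
  split_ifs with hw
  · rw [← gs_homotopy x z w]
    have : gs x (gd z) w = 0 := by
      unfold gs
      split_ifs with hx
      · rw [h2, mul_zero]
        rw [hD _ (Finset.notMem_erase _ _), Finset.insert_erase hx]
        exact hw
      · rfl
    rw [this, add_zero]
  · rw [h1]
    exact fun h => hw h.1

def HB (F : Finset α → Prop) (b : ℕ → ℕ) : Prop :=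
  ∀ q, Module.finrank ℚ (gZ F q) = Module.finrank ℚ (gB F q) + b q

section reduce
variable {F P : Finset α → Prop}

theorem gconv_reduce (hF : gconv F)
    (hP : ∀ u v, u ⊆ v → F u → F v → P u → P v) : gconv (fun w => F w ∧ ¬ P w) := by
  intro u v w huv hvw hu hw
  have hv := hF u v w huv hvw hu.1 hw.1
  exact ⟨hv, fun h => hw.2 (hP v w hvw hv hw.1 h)⟩

theorem cut_acyclic (hP : ∀ u v, u ⊆ v → F u → F v → P u → P v)
    {x : α} (hx : ∀ w, x ∉ w → (F w ∧ P w ↔ F (insert x w) ∧ P (insert x w)))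
    {q : ℕ} {z : Finset α → ℚ} (hz : z ∈ gsup F q) (hz0 : ∀ w, F w → P w → gd z w = 0) :
    ∃ y ∈ gsup F (q + 1), z - gcut F (gd y) ∈ gsup (fun w => F w ∧ ¬ P w) q := by
  have : gcut (fun w => F w ∧ P w) z ∈ gZ (fun w => F w ∧ P w) q := by
    rw [mem_gZ]
    constructor
    · intro w hw
      rw [gcut_apply]
      split_ifs with h
      · exact hz w (fun h' => hw ⟨h, h'.2⟩)
      · rfl
    · rintro w ⟨h1, h2⟩
      rw [← hz0 w h1 h2]
      apply gd_congr
      intro i hi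
      rw [gcut_apply]
      split_ifs with h
      · rfl
      · symm
        apply hz
        rintro ⟨h3, -⟩
        exact h ⟨h3, hP _ _ (Finset.subset_insert _ _) h1 h3 h2⟩
  obtain ⟨y, hy, hyz⟩ := toggle_acyclic hx this
  have hyF : y ∈ gsup F (q + 1) := fun w hw => hy w (fun h => hw ⟨h.1.1, h.2⟩)
  refine ⟨y, hyF, ?_⟩
  intro w hw
  have h0 := (gsup F q).sub_mem hz (gcut_gd_mem hyF) w
  by_cases h : F w ∧ w.card = q
  · have hPw : P w := by
      by_contra hPw
      exact hw ⟨⟨h.1, hPw⟩, h.2⟩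
    have := congrFun hyz w
    simp only [gcut_apply, h.1, hPw, and_self, if_true] at this
    simp [gcut_apply, h.1, this]
  · exact h0 h

theorem gZ_reduce_le (hP : ∀ u v, u ⊆ v → F u → F v → P u → P v) (q : ℕ) :
    gZ (fun w => F w ∧ ¬ P w) q ≤ gZ F q := by
  intro z hz
  obtain ⟨h1, h2⟩ := mem_gZ.1 hz
  refine mem_gZ.2 ⟨fun w hw => h1 w (fun h => hw ⟨h.1.1, h.2⟩), fun w hw => ?_⟩
  by_cases hp : P w
  · apply gd_zero
    intro i hi
    apply h1
    rintro ⟨⟨h3, h4⟩, -⟩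
    exact h4 (hP _ _ (Finset.subset_insert _ _) hw h3 hp)
  · exact h2 w ⟨hw, hp⟩

theorem gZ_reduce (hF : gconv F) (hP : ∀ u v, u ⊆ v → F u → F v → P u → P v)
    {x : α} (hx : ∀ w, x ∉ w → (F w ∧ P w ↔ F (insert x w) ∧ P (insert x w))) (q : ℕ) :
    gZ F q = gZ (fun w => F w ∧ ¬ P w) q ⊔ gB F q := by
  apply le_antisymm
  · intro z hz
    obtain ⟨h1, h2⟩ := mem_gZ.1 hz
    obtain ⟨y, hy, hyz⟩ := cut_acyclic hP hx h1 (fun w hw _ => h2 w hw)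
    have : z = (z - gcut F (gd y)) + gcut F (gd y) := by abel
    rw [this]
    refine Submodule.add_mem_sup (mem_gZ.2 ⟨hyz, fun w hw => ?_⟩) (mem_gB.2 ⟨y, hy, rfl⟩)
    rw [map_sub, Pi.sub_apply, h2 w hw.1, gd_cut_gd hF hy hw.1, sub_zero]
  · exact sup_le (gZ_reduce_le hP q) (gB_le_gZ hF q)

theorem gB_reduce (hF : gconv F) (hP : ∀ u v, u ⊆ v → F u → F v → P u → P v)
    {x : α} (hx : ∀ w, x ∉ w → (F w ∧ P w ↔ F (insert x w) ∧ P (insert x w))) (q : ℕ) :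
    gB (fun w => F w ∧ ¬ P w) q = gZ (fun w => F w ∧ ¬ P w) q ⊓ gB F q := by
  apply le_antisymm
  · refine le_inf (gB_le_gZ (gconv_reduce hF hP) q) ?_
    intro z hz
    obtain ⟨y, hy, rfl⟩ := mem_gB.1 hz
    refine mem_gB.2 ⟨y, fun w hw => hy w (fun h => hw ⟨h.1.1, h.2⟩), ?_⟩
    funext w
    rw [gcut_apply, gcut_apply]
    by_cases h1 : F w
    · by_cases h2 : P w
      · simp only [h1, h2, not_true, and_false, if_true, if_false]
        apply gd_zero
        intro i hi
        apply hy
        rintro ⟨⟨h3, h4⟩, -⟩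
        exact h4 (hP _ _ (Finset.subset_insert _ _) h1 h3 h2)
      · simp [h1, h2]
    · simp [h1]
  · rintro z ⟨hz, hzB⟩
    obtain ⟨y, hy, rfl⟩ := mem_gB.1 hzB
    obtain ⟨h1, -⟩ := mem_gZ.1 hz
    have h3 : ∀ w, F w → P w → gd y w = 0 := by
      intro w hw hp
      have := h1 w (fun h => h.1.2 hp)
      simpa [gcut_apply, hw] using this
    obtain ⟨v, hv, hvy⟩ := cut_acyclic hP hx hy h3
    refine mem_gB.2 ⟨_, hvy, ?_⟩
    funext w
    rw [gcut_apply]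
    split_ifs with hw
    · rw [map_sub, Pi.sub_apply, gd_cut_gd hF hv hw.1, sub_zero, gcut_apply, if_pos hw.1]
    · exact (h1 w (fun h => hw h.1)).symm

theorem HB_reduce (hF : gconv F) (P : Finset α → Prop)
    (hP : ∀ u v, u ⊆ v → F u → F v → P u → P v)
    (x : α) (hx : ∀ w, x ∉ w → (F w ∧ P w ↔ F (insert x w) ∧ P (insert x w)))
    {b : ℕ → ℕ} (h : HB (fun w => F w ∧ ¬ P w) b) : HB F b := by
  intro q
  have h1 := Submodule.finrank_sup_add_finrank_inf_eq (gZ (fun w => F w ∧ ¬ P w) q) (gB F q)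
  rw [← gZ_reduce hF hP hx, ← gB_reduce hF hP hx, h q] at h1
  omega

end reduce

theorem HB_empty {F : Finset α → Prop} (h : ∀ w, ¬ F w) : HB F (fun _ => 0) := by
  have h0 : ∀ q, gsup F q = ⊥ := by
    intro q
    rw [eq_bot_iff]
    intro z hz
    rw [Submodule.mem_bot]
    funext w
    exact hz w (fun h' => h w h'.1)
  intro q
  rw [gZ, gB, h0, h0, bot_inf_eq, Submodule.map_bot]
  rfl

theorem HB_toggle {F : Finset α → Prop} (hF : gconv F) (x : α)
    (hx : ∀ w, x ∉ w → (F w ↔ F (insert x w))) : HB F (fun _ => 0) := by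
  refine HB_reduce hF (fun _ => True) (fun _ _ _ _ _ _ => trivial) x ?_ (HB_empty ?_)
  · simpa using hx
  · simp

theorem HB_single {F : Finset α → Prop} (w0 : Finset α) (h : ∀ w, F w ↔ w = w0) :
    HB F (fun q => if q = w0.card then 1 else 0) := by
  have hd : ∀ q, ∀ y ∈ gsup F q, ∀ w, F w → gd y w = 0 := by
    intro q y hy w hw
    apply gd_zero
    intro i hi
    apply hy
    rintro ⟨h1, -⟩
    rw [h] at h1 hw
    rw [hw] at h1 hi
    exact hi (h1 ▸ Finset.mem_insert_self _ _)
  have hB : ∀ q, gB F q = ⊥ := by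
    intro q
    rw [eq_bot_iff]
    intro z hz
    obtain ⟨y, hy, rfl⟩ := mem_gB.1 hz
    rw [Submodule.mem_bot]
    funext w
    rw [gcut_apply]
    split_ifs with hw
    · exact hd _ y hy w hw
    · rfl
  intro q
  rw [hB q]
  simp only [finrank_bot, zero_add]
  by_cases hq : q = w0.card
  · rw [if_pos hq]
    have : gZ F q = Submodule.span ℚ {(Pi.single w0 1 : Finset α → ℚ)} := by
      apply le_antisymm
      · intro z hz
        obtain ⟨h1, -⟩ := mem_gZ.1 hz
        rw [Submodule.mem_span_singleton]
        refine ⟨z w0, ?_⟩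
        funext w
        by_cases hw : w = w0
        · subst hw; simp
        · simp only [Pi.smul_apply, Pi.single_apply, hw, if_false, smul_zero]
          exact (h1 w (fun h' => hw ((h w).1 h'.1))).symm
      · rw [Submodule.span_singleton_le_iff_mem]
        have hs : (Pi.single w0 1 : Finset α → ℚ) ∈ gsup F q := by
          intro w hw
          rw [Pi.single_apply, if_neg]
          rintro rfl
          exact hw ⟨(h _).2 rfl, hq.symm⟩
        exact mem_gZ.2 ⟨hs, fun w hw => hd _ _ hs w hw⟩
    rw [this, finrank_span_singleton]
    intro h0
    simpa using congrFun h0 w0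
  · rw [if_neg hq]
    have : gZ F q = ⊥ := by
      rw [eq_bot_iff]
      intro z hz
      obtain ⟨h1, -⟩ := mem_gZ.1 hz
      rw [Submodule.mem_bot]
      funext w
      apply h1
      rintro ⟨h2, h3⟩
      rw [h] at h2
      exact hq (by rw [← h3, h2])
    rw [this, finrank_bot]

end GaleAlgebra
section GaleBridge

set_option linter.unusedSectionVars false

variable {N : ℕ} {K : Finset (Finset (Fin N))} {τ : Finset (Fin N)}

/-- The family of exterior parts. -/
def gfam (K : Finset (Finset (Fin N))) (τ : Finset (Fin N)) (w : Finset (Fin N)) : Prop :=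
  w ⊆ τ ∧ τ \ w ∈ K

open Classical in
/-- Extension by zero. -/
noncomputable def gext (K : Finset (Finset (Fin N))) (τ : Finset (Fin N)) (q : ℕ) :
    CSpace N K τ q →ₗ[ℚ] (Finset (Fin N) → ℚ) where
  toFun f := fun w => if h : w ⊆ τ ∧ w.card = q ∧ τ \ w ∈ K then f ⟨w, h⟩ else 0
  map_add' x y := by
    funext w
    simp only [Pi.add_apply]
    split_ifs <;> simp
  map_smul' r x := by
    funext w
    simp only [Pi.smul_apply, RingHom.id_apply]
    split_ifs <;> simp

theorem gext_coe (q : ℕ) (f : CSpace N K τ q)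
    (w : {ω : Finset (Fin N) // ω ⊆ τ ∧ ω.card = q ∧ τ \ ω ∈ K}) :
    gext K τ q f w.1 = f w := by
  change (if h : _ then _ else _) = _
  rw [dif_pos w.2]

theorem gext_neg (q : ℕ) (f : CSpace N K τ q) (w : Finset (Fin N))
    (h : ¬ (w ⊆ τ ∧ w.card = q ∧ τ \ w ∈ K)) : gext K τ q f w = 0 := by
  change (if h : _ then _ else _) = _
  rw [dif_neg h]

theorem gext_inj (q : ℕ) : Function.Injective (gext K τ q) := by
  intro f g h
  funext w
  rw [← gext_coe q f w, ← gext_coe q g w, h]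

theorem gext_range (q : ℕ) : LinearMap.range (gext K τ q) = gsup (gfam K τ) q := by
  ext z
  constructor
  · rintro ⟨f, rfl⟩ w hw
    exact gext_neg q f w (fun h => hw ⟨⟨h.1, h.2.2⟩, h.2.1⟩)
  · intro hz
    refine ⟨fun w => z w.1, ?_⟩
    funext w
    by_cases h : w ⊆ τ ∧ w.card = q ∧ τ \ w ∈ K
    · exact gext_coe q _ ⟨w, h⟩
    · rw [gext_neg q _ w h, hz w (fun h' => h ⟨h'.1.1, h'.2, h'.1.2⟩)]

theorem gext_diff (q : ℕ) (f : CSpace N K τ (q + 1)) :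
    gcut (gfam K τ) (gd (gext K τ (q + 1) f)) = gext K τ q (diff N K τ q f) := by
  funext w
  by_cases h : w ⊆ τ ∧ w.card = q ∧ τ \ w ∈ K
  · have h2 : gfam K τ w := ⟨h.1, h.2.2⟩
    rw [gcut_apply, if_pos h2, gext_coe q _ ⟨w, h⟩, gd_apply]
    unfold diff
    rw [Matrix.toLin'_apply]
    unfold Matrix.mulVec dotProduct
    have key : ∀ i, i ∉ w → geps i w * gext K τ (q + 1) f (insert i w) ≠ 0 →
        (insert i w) ⊆ τ ∧ (insert i w).card = q + 1 ∧ τ \ (insert i w) ∈ K := by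
      intro i hi h0
      by_contra hc
      exact h0 (by rw [gext_neg _ _ _ hc, mul_zero])
    refine Finset.sum_bij_ne_zero
      (fun i hi h0 => ⟨insert i w, key i (by simpa using hi) h0⟩) ?_ ?_ ?_ ?_
    · intros; simp
    · intro i hi h0 j hj h0' he
      have he' : insert i w = insert j w := congrArg Subtype.val he
      have hi' : i ∈ insert j w := he' ▸ Finset.mem_insert_self i w
      rcases Finset.mem_insert.1 hi' with h1 | h1
      · exact h1
      · exact absurd h1 (by simpa using hi)
    · rintro ⟨v, hv⟩ - h0
      have hsub : w ⊆ v := by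
        by_contra hc
        apply h0
        simp [diffMat, hc]
      have hcard : (v \ w).card = 1 := by
        rw [Finset.card_sdiff_of_subset hsub]; omega
      obtain ⟨i, hi⟩ := Finset.card_eq_one.1 hcard
      have hiw : i ∉ w := by
        have : i ∈ v \ w := by rw [hi]; simp
        exact (Finset.mem_sdiff.1 this).2
      have hiv : insert i w = v := by
        rw [Finset.insert_eq, ← hi, Finset.sdiff_union_of_subset hsub]
      subst hiv
      have hf : f ⟨insert i w, hv⟩ ≠ 0 := fun h => h0 (by rw [h, mul_zero])
      refine ⟨i, by simpa using hiw, ?_, rfl⟩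
      rw [gext_coe (q + 1) f ⟨insert i w, hv⟩]
      refine mul_ne_zero ?_ hf
      unfold geps
      exact pow_ne_zero _ (by norm_num)
    · intro i hi h0
      have hiw : i ∉ w := by simpa using hi
      rw [gext_coe (q + 1) f ⟨insert i w, key i hiw h0⟩]
      congr 1
      have : insert i w \ w = {i} := by
        ext y
        simp only [Finset.mem_sdiff, Finset.mem_insert, Finset.mem_singleton]
        constructor
        · rintro ⟨rfl | h1, h2⟩
          · rfl
          · exact absurd h1 h2
        · rintro rfl
          exact ⟨Or.inl rfl, hiw⟩
      simp only [diffMat, Finset.subset_insert, if_true, geps, this, Finset.mem_singleton,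
        forall_eq]
  · rw [gext_neg q _ w h, gcut_apply]
    split_ifs with h2
    · apply gd_zero
      intro i hi
      apply gext_neg
      rintro ⟨-, h3, -⟩
      rw [Finset.card_insert_of_notMem hi] at h3
      exact h ⟨h2.1, by omega, h2.2⟩
    · rfl

theorem gext_cocycles (q : ℕ) : (cocycles N K τ q).map (gext K τ q) = gZ (gfam K τ) q := by
  cases q with
  | zero =>
    rw [cocycles, Submodule.map_top, gext_range]
    apply le_antisymm
    · intro z hz
      refine mem_gZ.2 ⟨hz, fun w _ => gd_zero (fun i hi => hz _ ?_)⟩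
      rintro ⟨-, h⟩
      rw [Finset.card_insert_of_notMem hi] at h
      omega
    · exact inf_le_left
  | succ q =>
    rw [cocycles, gZ, ← gext_range]
    ext z
    simp only [Submodule.mem_map, Submodule.mem_inf, LinearMap.mem_ker, LinearMap.mem_range,
      LinearMap.comp_apply]
    constructor
    · rintro ⟨f, hf, rfl⟩
      exact ⟨⟨f, rfl⟩, by rw [gext_diff, hf, map_zero]⟩
    · rintro ⟨⟨f, rfl⟩, hf⟩
      refine ⟨f, ?_, rfl⟩
      rw [gext_diff] at hf
      exact gext_inj q (by rw [hf, map_zero])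

theorem gext_bound (q : ℕ) :
    (LinearMap.range (diff N K τ q)).map (gext K τ q) = gB (gfam K τ) q := by
  rw [gB, ← gext_range, ← LinearMap.range_comp, ← LinearMap.range_comp]
  congr 1
  apply LinearMap.ext
  intro f
  exact (gext_diff q f).symm

theorem betti_term (hF : gconv (gfam K τ)) {b : ℕ → ℕ} (hb : HB (gfam K τ) b) (q : ℕ) :
    Module.finrank ℚ
      (↥(cocycles N K τ q) ⧸
        Submodule.comap (cocycles N K τ q).subtype (LinearMap.range (diff N K τ q))) = b q := by
  have hle : LinearMap.range (diff N K τ q) ≤ cocycles N K τ q := by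
    have := gB_le_gZ hF q
    rw [← gext_bound, ← gext_cocycles] at this
    exact (Submodule.map_le_map_iff_of_injective (gext_inj q) _ _).1 this
  have h1 := Submodule.finrank_quotient_add_finrank
    (Submodule.comap (cocycles N K τ q).subtype (LinearMap.range (diff N K τ q)))
  rw [(Submodule.comapSubtypeEquivOfLe hle).finrank_eq] at h1
  have h2 := hb q
  rw [← gext_bound, ← gext_cocycles,
    ← (Submodule.equivMapOfInjective (gext K τ q) (gext_inj q) _).finrank_eq,
    ← (Submodule.equivMapOfInjective (gext K τ q) (gext_inj q) _).finrank_eq] at h2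
  omega

end GaleBridge
section GaleComb

set_option linter.unusedSectionVars false

variable {α : Type} [LinearOrder α] [Fintype α]

theorem HB_congr {F G : Finset α → Prop} (h : ∀ w, F w ↔ G w) {b : ℕ → ℕ} (hG : HB G b) :
    HB F b := by
  have : F = G := funext (fun w => propext (h w))
  rw [this]; exact hG

/-- Families of sets consisting of a fixed part and two nonempty blocks. -/
theorem HB_two_block (w1 : Finset α) (A B : α → Prop) (hAB : ∀ x, A x → B x → False)
    (h1A : ∀ x ∈ w1, ¬ A x) (h1B : ∀ x ∈ w1, ¬ B x) (z y : α) (hz : A z) (hy : B y)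
    {G : Finset α → Prop}
    (hG : ∀ w, G w ↔ w1 ⊆ w ∧ (∀ x ∈ w, x ∈ w1 ∨ A x ∨ B x) ∧ (∃ x ∈ w, A x) ∧ ∃ x ∈ w, B x) :
    HB G (fun q => if q = w1.card + 2 then 1 else 0) := by
  have hzy : z ≠ y := fun e => hAB z hz (e ▸ hy)
  have c1 : gconv G := by
    intro u v w huv hvw hu hw
    rw [hG] at *
    obtain ⟨a1, a2, ⟨p, a3, a3'⟩, s, a4, a4'⟩ := hu
    exact ⟨a1.trans huv, fun x hx => hw.2.1 x (hvw hx), ⟨p, huv a3, a3'⟩, s, huv a4, a4'⟩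
  have m1 : ∀ u v : Finset α, u ⊆ v → G u → G v → (∃ x ∈ u, B x ∧ x ≠ y) →
      (∃ x ∈ v, B x ∧ x ≠ y) := by
    rintro u v huv - - ⟨x, hx, h⟩
    exact ⟨x, huv hx, h⟩
  refine HB_reduce c1 (fun w => ∃ x ∈ w, B x ∧ x ≠ y) m1 y ?_ ?_
  · intro w hw
    simp only [hG]
    constructor
    · rintro ⟨⟨a1, a2, ⟨p, a3, a3'⟩, s, a4, a4'⟩, t, a5, a6⟩
      refine ⟨⟨a1.trans (Finset.subset_insert _ _), ?_, ⟨p, by simp [a3], a3'⟩, s, by simp [a4], a4'⟩,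
        t, by simp [a5], a6⟩
      intro x hx
      rcases Finset.mem_insert.1 hx with rfl | hx
      · exact Or.inr (Or.inr hy)
      · exact a2 x hx
    · rintro ⟨⟨a1, a2, ⟨p, a3, a3'⟩, s, a4, a4'⟩, t, a5, a6⟩
      have ht : t ∈ w := by
        rcases Finset.mem_insert.1 a5 with rfl | h
        · exact absurd rfl a6.2
        · exact h
      have hp : p ∈ w := by
        rcases Finset.mem_insert.1 a3 with rfl | h
        · exact (hAB _ a3' hy).elim
        · exact h
      refine ⟨⟨?_, fun x hx => a2 x (by simp [hx]), ⟨p, hp, a3'⟩, t, ht, a6.1⟩, t, ht, a6⟩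
      intro x hx
      rcases Finset.mem_insert.1 (a1 hx) with rfl | h
      · exact (h1B _ hx hy).elim
      · exact h
  have c2 := gconv_reduce c1 m1
  refine HB_reduce c2 (fun w => ∃ x ∈ w, A x ∧ x ≠ z) ?_ z ?_ ?_
  · rintro u v huv - - ⟨x, hx, h⟩
    exact ⟨x, huv hx, h⟩
  · intro w hw
    simp only [hG]
    constructor
    · rintro ⟨⟨⟨a1, a2, ⟨p, a3, a3'⟩, s, a4, a4'⟩, n1⟩, t, a5, a6⟩
      refine ⟨⟨⟨a1.trans (Finset.subset_insert _ _), ?_, ⟨p, by simp [a3], a3'⟩, s, by simp [a4], a4'⟩,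
        ?_⟩, t, by simp [a5], a6⟩
      · intro x hx
        rcases Finset.mem_insert.1 hx with rfl | hx
        · exact Or.inr (Or.inl hz)
        · exact a2 x hx
      · rintro ⟨x, hx, hx2, hx3⟩
        rcases Finset.mem_insert.1 hx with rfl | hx
        · exact hAB _ hz hx2
        · exact n1 ⟨x, hx, hx2, hx3⟩
    · rintro ⟨⟨⟨a1, a2, ⟨p, a3, a3'⟩, s, a4, a4'⟩, n1⟩, t, a5, a6⟩
      have ht : t ∈ w := by
        rcases Finset.mem_insert.1 a5 with rfl | h
        · exact absurd rfl a6.2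
        · exact h
      have hs : s ∈ w := by
        rcases Finset.mem_insert.1 a4 with rfl | h
        · exact (hAB _ hz a4').elim
        · exact h
      refine ⟨⟨⟨?_, fun x hx => a2 x (by simp [hx]), ⟨t, ht, a6.1⟩, s, hs, a4'⟩, ?_⟩, t, ht, a6⟩
      · intro x hx
        rcases Finset.mem_insert.1 (a1 hx) with rfl | h
        · exact (h1A _ hx hz).elim
        · exact h
      · rintro ⟨x, hx, hx2⟩
        exact n1 ⟨x, by simp [hx], hx2⟩
  have hcard : (insert y (insert z w1)).card = w1.card + 2 := by
    rw [Finset.card_insert_of_notMem, Finset.card_insert_of_notMem]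
    · exact fun h => h1A _ h hz
    · simp only [Finset.mem_insert, not_or]
      exact ⟨hzy.symm, fun h => h1B _ h hy⟩
  rw [← hcard]
  apply HB_single
  intro w
  simp only [hG]
  constructor
  · rintro ⟨⟨⟨a1, a2, ⟨p, a3, a3'⟩, s, a4, a4'⟩, n1⟩, n2⟩
    have e1 : p = z := by
      by_contra h; exact n2 ⟨p, a3, a3', h⟩
    have e2 : s = y := by
      by_contra h; exact n1 ⟨s, a4, a4', h⟩
    subst e1 e2
    ext x
    simp only [Finset.mem_insert]
    constructor
    · intro hx
      rcases a2 x hx with h | h | h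
      · exact Or.inr (Or.inr h)
      · exact Or.inr (Or.inl (by by_contra h'; exact n2 ⟨x, hx, h, h'⟩))
      · exact Or.inl (by by_contra h'; exact n1 ⟨x, hx, h, h'⟩)
    · rintro (rfl | rfl | h)
      · exact a4
      · exact a3
      · exact a1 h
  · rintro rfl
    refine ⟨⟨⟨?_, ?_, ⟨z, by simp, hz⟩, y, by simp, hy⟩, ?_⟩, ?_⟩
    · intro x hx; simp [hx]
    · intro x hx
      simp only [Finset.mem_insert] at hx
      rcases hx with rfl | rfl | h
      · exact Or.inr (Or.inr hy)
      · exact Or.inr (Or.inl hz)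
      · exact Or.inl h
    · rintro ⟨x, hx, h1, h2⟩
      simp only [Finset.mem_insert] at hx
      rcases hx with rfl | rfl | h
      · exact h2 rfl
      · exact hAB _ hz h1
      · exact h1B _ h h1
    · rintro ⟨x, hx, h1, h2⟩
      simp only [Finset.mem_insert] at hx
      rcases hx with rfl | rfl | h
      · exact hAB _ h1 hy
      · exact h2 rfl
      · exact h1A _ h h1

section interval
variable {r t0 t1 : ℕ} {l : α → ℕ} {F : Finset α → Prop}

theorem interval_conv
    (hF : ∀ w, F w ↔ (∀ x ∈ w, t0 ≤ l x ∧ l x ≤ t1 + r) ∧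
      ∀ t, t0 ≤ t → t ≤ t1 → ∃ x ∈ w, t ≤ l x ∧ l x ≤ t + r) : gconv F := by
  intro u v w huv hvw hu hw
  rw [hF] at *
  refine ⟨fun x hx => hw.1 x (hvw hx), fun t h1 h2 => ?_⟩
  obtain ⟨x, hx, h⟩ := hu.2 t h1 h2
  exact ⟨x, huv hx, h⟩

theorem interval_one (hs : ∀ j, t0 ≤ j → j ≤ t1 + r → ∃ x, l x = j) (h01 : t1 = t0)
    (hF : ∀ w, F w ↔ (∀ x ∈ w, t0 ≤ l x ∧ l x ≤ t1 + r) ∧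
      ∀ t, t0 ≤ t → t ≤ t1 → ∃ x ∈ w, t ≤ l x ∧ l x ≤ t + r) :
    HB F (fun q => if q = 1 then 1 else 0) := by
  subst h01
  obtain ⟨x, hx⟩ := hs t1 le_rfl (by omega)
  have hG : ∀ w, F w ↔ (∀ x ∈ w, t1 ≤ l x ∧ l x ≤ t1 + r) ∧ ∃ x, x ∈ w := by
    intro w
    rw [hF]
    refine and_congr_right (fun h => ⟨fun h' => ?_, ?_⟩)
    · obtain ⟨y, hy, -⟩ := h' t1 le_rfl le_rfl
      exact ⟨y, hy⟩
    · rintro ⟨y, hy⟩ t h1 h2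
      have : t = t1 := le_antisymm h2 h1
      subst this
      exact ⟨y, hy, h y hy⟩
  refine HB_reduce (interval_conv hF) (fun w => ∃ y ∈ w, y ≠ x) ?_ x ?_ ?_
  · rintro u v huv - - ⟨y, hy, h⟩
    exact ⟨y, huv hy, h⟩
  · intro w hw
    simp only [hG]
    constructor
    · rintro ⟨⟨a1, a2⟩, y, hy, hyx⟩
      refine ⟨⟨?_, x, by simp⟩, y, by simp [hy], hyx⟩
      intro p hp
      rcases Finset.mem_insert.1 hp with rfl | hp
      · omega
      · exact a1 p hp
    · rintro ⟨⟨a1, a2⟩, y, hy, hyx⟩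
      have hy' : y ∈ w := by simpa [hyx] using hy
      exact ⟨⟨fun p hp => a1 p (by simp [hp]), y, hy'⟩, y, hy', hyx⟩
  · have := HB_single (F := fun w => F w ∧ ¬ ∃ y ∈ w, y ≠ x) {x} ?_
    · simpa using this
    intro w
    simp only [hG]
    constructor
    · rintro ⟨⟨a1, y, hy⟩, n⟩
      push Not at n
      rw [Finset.eq_singleton_iff_unique_mem]
      exact ⟨n y hy ▸ hy, n⟩
    · rintro rfl
      refine ⟨⟨?_, x, by simp⟩, by simp⟩
      intro p hp
      rw [Finset.mem_singleton.1 hp]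
      omega

theorem interval_two (hs : ∀ j, t0 ≤ j → j ≤ t1 + r → ∃ x, l x = j) (h01 : t1 = t0 + 1)
    (hF : ∀ w, F w ↔ (∀ x ∈ w, t0 ≤ l x ∧ l x ≤ t1 + r) ∧
      ∀ t, t0 ≤ t → t ≤ t1 → ∃ x ∈ w, t ≤ l x ∧ l x ≤ t + r) :
    HB F (fun q => if q = 2 then 1 else 0) := by
  obtain ⟨x, hx⟩ := hs t0 le_rfl (by omega)
  obtain ⟨y, hy⟩ := hs (t1 + r) (by omega) le_rfl
  refine HB_reduce (interval_conv hF) (fun w => ∃ y ∈ w, t0 + 1 ≤ l y ∧ l y ≤ t0 + r) ?_ x ?_ ?_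
  · rintro u v huv - - ⟨y, hy, h⟩
    exact ⟨y, huv hy, h⟩
  · intro w hw
    simp only [hF]
    constructor
    · rintro ⟨⟨a1, a2⟩, y, hy, hyx⟩
      refine ⟨⟨?_, fun t h1 h2 => ?_⟩, y, by simp [hy], hyx⟩
      · intro p hp
        rcases Finset.mem_insert.1 hp with rfl | hp
        · omega
        · exact a1 p hp
      · obtain ⟨p, hp, h⟩ := a2 t h1 h2
        exact ⟨p, by simp [hp], h⟩
    · rintro ⟨⟨a1, a2⟩, y, hy, hyx⟩
      have hy' : y ∈ w := by
        rcases Finset.mem_insert.1 hy with rfl | hp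
        · omega
        · exact hp
      exact ⟨⟨fun p hp => a1 p (by simp [hp]), fun t h1 h2 => ⟨y, hy', by omega⟩⟩, y, hy', hyx⟩
  · refine HB_two_block ∅ (fun p => l p = t0) (fun p => l p = t1 + r) (fun p h1 h2 => by omega)
      (by simp) (by simp) x y hx hy ?_
    intro w
    rw [hF]
    constructor
    · rintro ⟨⟨a1, a2⟩, n⟩
      push Not at n
      refine ⟨by simp, fun p hp => ?_, ?_, ?_⟩
      · have := a1 p hp
        have := n p hp
        right; omega
      · obtain ⟨p, hp, h⟩ := a2 t0 le_rfl (by omega)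
        have := n p hp
        exact ⟨p, hp, by omega⟩
      · obtain ⟨p, hp, h⟩ := a2 t1 (by omega) le_rfl
        have := n p hp
        exact ⟨p, hp, by omega⟩
    · rintro ⟨-, b1, ⟨p, hp, b2⟩, s, hs, b3⟩
      refine ⟨⟨fun v hv => ?_, fun t h1 h2 => ?_⟩, ?_⟩
      · have := b1 v hv
        simp only [Finset.notMem_empty, false_or] at this
        omega
      · by_cases ht : t = t0
        · exact ⟨p, hp, by omega⟩
        · exact ⟨s, hs, by omega⟩
      · rintro ⟨v, hv, h⟩
        have := b1 v hv
        simp only [Finset.notMem_empty, false_or] at this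
        omega

theorem interval_many (hs : ∀ j, t0 ≤ j → j ≤ t1 + r → ∃ x, l x = j) (h01 : t0 + 2 ≤ t1)
    (h1r : t1 ≤ t0 + r + 1)
    (hF : ∀ w, F w ↔ (∀ x ∈ w, t0 ≤ l x ∧ l x ≤ t1 + r) ∧
      ∀ t, t0 ≤ t → t ≤ t1 → ∃ x ∈ w, t ≤ l x ∧ l x ≤ t + r) :
    HB F (fun _ => 0) := by
  obtain ⟨x, hx⟩ := hs t0 le_rfl (by omega)
  obtain ⟨y, hy⟩ := hs (t1 + r) (by omega) le_rfl
  have m1 : ∀ u v : Finset α, u ⊆ v → F u → F v → (∃ p ∈ u, p ≠ x ∧ l p ≤ t0 + r) →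
      ∃ p ∈ v, p ≠ x ∧ l p ≤ t0 + r := by
    rintro u v huv - - ⟨y, hy, h⟩
    exact ⟨y, huv hy, h⟩
  refine HB_reduce (interval_conv hF) (fun w => ∃ p ∈ w, p ≠ x ∧ l p ≤ t0 + r) m1 x ?_ ?_
  · intro w hw
    simp only [hF]
    constructor
    · rintro ⟨⟨a1, a2⟩, y, hy, hyx⟩
      refine ⟨⟨?_, fun t h1 h2 => ?_⟩, y, by simp [hy], hyx⟩
      · intro p hp
        rcases Finset.mem_insert.1 hp with rfl | hp
        · omega
        · exact a1 p hp
      · obtain ⟨p, hp, h⟩ := a2 t h1 h2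
        exact ⟨p, by simp [hp], h⟩
    · rintro ⟨⟨a1, a2⟩, y, hy, hyx, hy2⟩
      have hy' : y ∈ w := by simpa [hyx] using hy
      refine ⟨⟨fun p hp => a1 p (by simp [hp]), fun t h1 h2 => ?_⟩, y, hy', hyx, hy2⟩
      by_cases ht : t = t0
      · exact ⟨y, hy', by have := a1 y hy; omega⟩
      · obtain ⟨p, hp, h⟩ := a2 t h1 h2
        rcases Finset.mem_insert.1 hp with rfl | hp
        · omega
        · exact ⟨p, hp, h⟩
  · refine HB_toggle (gconv_reduce (interval_conv hF) m1) y ?_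
    intro w hw
    simp only [hF]
    constructor
    · rintro ⟨⟨a1, a2⟩, n⟩
      refine ⟨⟨?_, fun t h1 h2 => ?_⟩, ?_⟩
      · intro p hp
        rcases Finset.mem_insert.1 hp with rfl | hp
        · omega
        · exact a1 p hp
      · obtain ⟨p, hp, h⟩ := a2 t h1 h2
        exact ⟨p, by simp [hp], h⟩
      · rintro ⟨p, hp, h⟩
        rcases Finset.mem_insert.1 hp with rfl | hp
        · omega
        · exact n ⟨p, hp, h⟩
    · rintro ⟨⟨a1, a2⟩, n⟩
      have n' : ∀ p ∈ insert y w, p = x ∨ t0 + r < l p := by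
        intro p hp
        by_contra h
        push Not at h
        exact n ⟨p, hp, h⟩
      refine ⟨⟨fun p hp => a1 p (by simp [hp]), fun t h1 h2 => ?_⟩, ?_⟩
      · by_cases ht : t = t0
        · obtain ⟨p, hp, h⟩ := a2 t h1 h2
          rcases Finset.mem_insert.1 hp with rfl | hp
          · omega
          · exact ⟨p, hp, h⟩
        · obtain ⟨p, hp, h⟩ := a2 (t0 + 1) (by omega) (by omega)
          have hp2 := n' p hp
          have hp3 : p ≠ x := by rintro rfl; omega
          rcases Finset.mem_insert.1 hp with rfl | hp
          · omega
          · refine ⟨p, hp, ?_⟩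
            rcases hp2 with h | h
            · exact absurd h hp3
            · omega
      · rintro ⟨p, hp, h⟩
        exact n ⟨p, by simp [hp], h⟩

end interval

/-- Label `v` lies in the cyclic arc starting at `t`, with `r+1` labels out of `2r+3`. -/
def inArc (r t v : ℕ) : Prop := (t ≤ v ∧ v ≤ t + r) ∨ v + r + 3 ≤ t

theorem circle_HB {r : ℕ} {l : α → ℕ} {F : Finset α → Prop} (hl : ∀ x, l x < 2 * r + 3)
    (hs : ∀ j, j < 2 * r + 3 → ∃ x, l x = j)
    (hF : ∀ w, F w ↔ ∀ t, t < 2 * r + 3 → ∃ x ∈ w, inArc r t (l x)) :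
    HB F (fun q => if q = 3 then 1 else 0) := by
  obtain ⟨x, hx⟩ := hs 0 (by omega)
  obtain ⟨z, hz⟩ := hs (r + 1) (by omega)
  obtain ⟨y, hy⟩ := hs (r + 2) (by omega)
  have Fmono : ∀ u v, u ⊆ v → F u → F v := by
    intro u v huv hu
    rw [hF] at *
    intro t ht
    obtain ⟨p, hp, h⟩ := hu t ht
    exact ⟨p, huv hp, h⟩
  have c1 : gconv F := fun u v w huv _ hu _ => Fmono u v huv hu
  obtain ⟨P1, hP1⟩ : ∃ P1 : Finset α → Prop,
    ∀ w, P1 w ↔ ∀ t, t < 2 * r + 3 → ∃ p ∈ w, p ≠ x ∧ inArc r t (l p) := ⟨_, fun _ => Iff.rfl⟩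
  have P1mono : ∀ u v, u ⊆ v → P1 u → P1 v := by
    intro u v huv hu
    rw [hP1] at *
    intro t ht
    obtain ⟨p, hp, h⟩ := hu t ht
    exact ⟨p, huv hp, h⟩
  have P1F : ∀ w, P1 w → F w := by
    intro w hw
    rw [hP1] at hw
    rw [hF]
    intro t ht
    obtain ⟨p, hp, h⟩ := hw t ht
    exact ⟨p, hp, h.2⟩
  have m1 : ∀ u v, u ⊆ v → F u → F v → P1 u → P1 v := fun u v huv _ _ h => P1mono u v huv h
  have c2 := gconv_reduce c1 m1
  refine HB_reduce c1 P1 m1 x ?_ ?_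
  · intro w hw
    have : P1 w ↔ P1 (insert x w) := by
      refine ⟨P1mono _ _ (Finset.subset_insert _ _), fun h => ?_⟩
      rw [hP1] at *
      intro t ht
      obtain ⟨p, hp, h1, h2⟩ := h t ht
      exact ⟨p, by simpa [h1] using hp, h1, h2⟩
    exact ⟨fun h => ⟨P1F _ (this.1 h.2), this.1 h.2⟩, fun h => ⟨P1F _ (this.2 h.2), this.2 h.2⟩⟩
  refine HB_reduce c2 (fun w => ∃ p ∈ w, 1 ≤ l p ∧ l p ≤ r) ?_ z ?_ ?_
  · rintro u v huv - - ⟨y, hy, h⟩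
    exact ⟨y, huv hy, h⟩
  · intro w hw
    constructor
    · rintro ⟨⟨a1, a2⟩, p, hp, h⟩
      refine ⟨⟨Fmono _ _ (Finset.subset_insert _ _) a1, fun h1 => a2 ?_⟩, p, by simp [hp], h⟩
      rw [hP1] at *
      intro t ht
      obtain ⟨s, hs1, hs2, hs3⟩ := h1 t ht
      rcases Finset.mem_insert.1 hs1 with rfl | hs1
      · obtain ⟨s', hs', hs''⟩ := (hF w).1 a1 t ht
        refine ⟨s', hs', ?_, hs''⟩
        rintro rfl
        unfold inArc at hs'' hs3
        omega
      · exact ⟨s, hs1, hs2, hs3⟩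
    · rintro ⟨⟨a1, a2⟩, p, hp, h⟩
      have hpw : p ∈ w := by
        rcases Finset.mem_insert.1 hp with rfl | hp
        · omega
        · exact hp
      refine ⟨⟨?_, fun h1 => a2 (P1mono _ _ (Finset.subset_insert _ _) h1)⟩, p, hpw, h⟩
      rw [hF] at a1 ⊢
      obtain ⟨v, hv, hva⟩ := a1 (r + 2) (by omega)
      have hvl := hl v
      have hvw : v ∈ w := by
        rcases Finset.mem_insert.1 hv with rfl | hp
        · unfold inArc at hva; omega
        · exact hp
      rw [hP1] at a2
      push Not at a2
      obtain ⟨s, hs1, hs2⟩ := a2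
      obtain ⟨x', hx', hx'a⟩ := a1 s hs1
      have hxx : x' = x := by
        by_contra hne
        exact hs2 x' hx' hne hx'a
      subst hxx
      have n1 := hs2 v hv (by rintro rfl; unfold inArc at hva; omega)
      have n2 := hs2 p hp (by rintro rfl; omega)
      intro t ht
      obtain ⟨b, hb, hba⟩ := a1 t ht
      rcases Finset.mem_insert.1 hb with rfl | hb
      · unfold inArc at *
        by_cases hpt : t ≤ l p
        · exact ⟨p, hpw, by omega⟩
        · exact ⟨v, hvw, by omega⟩
      · exact ⟨b, hb, hba⟩
  · refine HB_two_block {x} (fun p => l p = r + 1) (fun p => r + 2 ≤ l p)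
      (fun p h1 h2 => by omega) ?_ ?_ z y hz hy.ge ?_
    · intro p hp
      rw [Finset.mem_singleton.1 hp]
      omega
    · intro p hp
      rw [Finset.mem_singleton.1 hp]
      omega
    intro w
    constructor
    · rintro ⟨⟨a1, a2⟩, n⟩
      push Not at n
      rw [hP1] at a2
      push Not at a2
      obtain ⟨s, hs1, hs2⟩ := a2
      rw [hF] at a1
      obtain ⟨x', hx', hx'a⟩ := a1 s hs1
      have hxx : x' = x := by
        by_contra hne
        exact hs2 x' hx' hne hx'a
      subst hxx
      refine ⟨by simpa using hx', fun p hp => ?_, ?_, ?_⟩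
      · by_cases hpx : p = x'
        · left; simp [hpx]
        · right
          have h1 := hs2 p hp hpx
          have h2 := n p hp
          unfold inArc at *
          by_cases h0 : l p = 0
          · rw [h0] at h1; rw [hx] at hx'a; exact absurd hx'a h1
          · omega
      · obtain ⟨p, hp, h⟩ := a1 1 (by omega)
        have h2 := n p hp
        unfold inArc at h
        exact ⟨p, hp, by omega⟩
      · obtain ⟨p, hp, h⟩ := a1 (r + 2) (by omega)
        unfold inArc at h
        exact ⟨p, hp, by omega⟩
    · rintro ⟨b0, b1, ⟨p, hp, b2⟩, s, hs, b3⟩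
      have hxw : x ∈ w := b0 (by simp)
      refine ⟨⟨?_, ?_⟩, ?_⟩
      · rw [hF]
        intro t ht
        by_cases h1 : t = 0 ∨ r + 3 ≤ t
        · exact ⟨x, hxw, by unfold inArc; omega⟩
        · by_cases h2 : t = r + 2
          · have := hl s
            exact ⟨s, hs, by unfold inArc; omega⟩
          · exact ⟨p, hp, by unfold inArc; omega⟩
      · rw [hP1]
        intro h
        obtain ⟨v, hv, hvx, hva⟩ := h 0 (by omega)
        have := b1 v hv
        simp only [Finset.mem_singleton, hvx, false_or] at this
        unfold inArc at hva
        omega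
      · rintro ⟨v, hv, hva⟩
        have := b1 v hv
        simp only [Finset.mem_singleton] at this
        rcases this with rfl | h
        · omega
        · omega

end GaleComb
section GaleFinal

set_option linter.unusedSectionVars false

variable {r m' N : ℕ} [NeZero m'] {c : Fin N → ZMod m'}

theorem val_shift (hm : m' = 2 * r + 3) (v i : ZMod m') (t : ℕ) (ht : t < 2 * r + 3) :
    (v - (i + (t : ZMod m'))).val ≤ r ↔ inArc r t (v - i).val := by
  have hlt : (v - i).val < m' := ZMod.val_lt _
  have he : v - (i + (t : ZMod m')) = (((v - i).val : ℕ) : ZMod m') - t := by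
    rw [ZMod.natCast_zmod_val]; ring
  unfold inArc
  by_cases h : t ≤ (v - i).val
  · have : v - (i + (t : ZMod m')) = (((v - i).val - t : ℕ) : ZMod m') := by
      rw [he, Nat.cast_sub h]
    rw [this, ZMod.val_natCast_of_lt (by omega)]
    omega
  · have : v - (i + (t : ZMod m')) = (((v - i).val + m' - t : ℕ) : ZMod m') := by
      rw [he, Nat.cast_sub (by omega), Nat.cast_add, ZMod.natCast_self, add_zero]
    rw [this, ZMod.val_natCast_of_lt (by omega)]
    omega

theorem gfam_iff (hm : m' = 2 * r + 3) (i : ZMod m') (τ w : Finset (Fin N)) :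
    gfam (galeComplex (r + 2) m' N c) τ w ↔ w ⊆ τ ∧ ∀ t, t < 2 * r + 3 →
      (∀ x, inArc r t (c x - i).val → x ∈ τ) → ∃ x ∈ w, inArc r t (c x - i).val := by
  unfold gfam galeComplex
  refine and_congr_right (fun hw => ?_)
  simp only [Finset.mem_filter, Finset.mem_univ, true_and, Finset.mem_sdiff, not_exists,
    Nat.add_sub_cancel]
  constructor
  · intro h t ht hτ
    by_contra hc
    push Not at hc
    apply h (i + (t : ZMod m'))
    intro x hx
    rw [val_shift hm _ _ _ ht] at hx
    exact ⟨hτ x hx, fun hxw => hc x hxw hx⟩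
  · intro h j hj
    have hlt : (j - i).val < m' := ZMod.val_lt _
    have hji : j = i + (((j - i).val : ℕ) : ZMod m') := by
      rw [ZMod.natCast_zmod_val]; ring
    rw [hji] at hj
    simp only [val_shift hm _ _ _ (show (j - i).val < 2 * r + 3 by omega)] at hj
    obtain ⟨x, hx, hx2⟩ := h (j - i).val (by omega) (fun x hx => (hj x hx).1)
    exact (hj x hx2).2 hx

theorem gfam_conv (hm : m' = 2 * r + 3) (τ : Finset (Fin N)) :
    gconv (gfam (galeComplex (r + 2) m' N c) τ) := by
  intro u v w huv hvw hu hw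
  rw [gfam_iff hm 0] at *
  refine ⟨hvw.trans hw.1, fun t ht h => ?_⟩
  obtain ⟨x, hx, h2⟩ := hu.2 t ht h
  exact ⟨x, huv hx, h2⟩

theorem lab_surj (hm : m' = 2 * r + 3) (hcs : ∀ v, ∃ x, c x = v) (i : ZMod m') (j : ℕ)
    (hj : j < 2 * r + 3) : ∃ x, (c x - i).val = j := by
  obtain ⟨x, hx⟩ := hcs (i + (j : ZMod m'))
  refine ⟨x, ?_⟩
  rw [hx, add_sub_cancel_left, ZMod.val_natCast_of_lt (by omega)]

theorem gfam_interval (hm : m' = 2 * r + 3) (hcs : ∀ v, ∃ x, c x = v) (i : ZMod m')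
    (t0 t1 : ℕ) (h1 : t1 ≤ r + 1) (τ : Finset (Fin N))
    (hτ : ∀ x, x ∈ τ ↔ t0 ≤ (c x - i).val ∧ (c x - i).val ≤ t1 + r) (w : Finset (Fin N)) :
    gfam (galeComplex (r + 2) m' N c) τ w ↔
      (∀ x ∈ w, t0 ≤ (c x - i).val ∧ (c x - i).val ≤ t1 + r) ∧
      ∀ t, t0 ≤ t → t ≤ t1 → ∃ x ∈ w, t ≤ (c x - i).val ∧ (c x - i).val ≤ t + r := by
  rw [gfam_iff hm i]
  have e1 : w ⊆ τ ↔ ∀ x ∈ w, t0 ≤ (c x - i).val ∧ (c x - i).val ≤ t1 + r :=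
    ⟨fun h x hx => (hτ x).1 (h hx), fun h x hx => (hτ x).2 (h x hx)⟩
  rw [e1]
  refine and_congr_right (fun hw => ⟨fun h t ht0 ht1 => ?_, fun h t ht hx => ?_⟩)
  · obtain ⟨x, hx, hx2⟩ := h t (by omega) (fun x hx => by
      rw [hτ]; unfold inArc at hx; omega)
    exact ⟨x, hx, by unfold inArc at hx2; omega⟩
  · have q0 : t ≤ r + 1 := by
      by_contra hc
      obtain ⟨x, hx1⟩ := lab_surj hm hcs i (2 * r + 2) (by omega)
      have := (hτ x).1 (hx x (by unfold inArc; omega))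
      omega
    obtain ⟨x, hx1⟩ := lab_surj hm hcs i t (by omega)
    obtain ⟨y, hy1⟩ := lab_surj hm hcs i (t + r) (by omega)
    have hx2 := (hτ x).1 (hx x (by unfold inArc; omega))
    have hy2 := (hτ y).1 (hx y (by unfold inArc; omega))
    obtain ⟨z, hz, hz2⟩ := h t (by omega) (by omega)
    exact ⟨z, hz, Or.inl hz2⟩

/-- Vertices with labels in the arc of `L` labels starting at `i`. -/
def arcSet (c : Fin N → ZMod m') (L : ℕ) (i : ZMod m') : Finset (Fin N) :=
  Finset.univ.filter (fun x => (c x - i).val < L)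

theorem mem_arcSet {L : ℕ} {i : ZMod m'} {x : Fin N} :
    x ∈ arcSet c L i ↔ (c x - i).val < L := by simp [arcSet]

theorem HB_tau_empty (hm : m' = 2 * r + 3) (hcs : ∀ v, ∃ x, c x = v) :
    HB (gfam (galeComplex (r + 2) m' N c) ∅) (fun q => if q = 0 then 1 else 0) := by
  refine HB_single ∅ (fun w => ?_)
  rw [gfam_iff hm 0]
  constructor
  · intro h; simpa using h.1
  · rintro rfl
    refine ⟨by simp, fun t ht h => ?_⟩
    obtain ⟨x, hx⟩ := lab_surj hm hcs 0 t ht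
    simpa using h x (by unfold inArc; omega)

theorem HB_tau_univ (hm : m' = 2 * r + 3) (hcs : ∀ v, ∃ x, c x = v) :
    HB (gfam (galeComplex (r + 2) m' N c) Finset.univ) (fun q => if q = 3 then 1 else 0) := by
  refine circle_HB (r := r) (l := fun x => (c x - 0).val) (fun x => ?_)
    (fun j hj => lab_surj hm hcs 0 j hj) (fun w => ?_)
  · have : (c x - 0).val < m' := ZMod.val_lt _
    show (c x - 0).val < _
    omega
  · rw [gfam_iff hm 0]
    simp

theorem HB_tau_one (hm : m' = 2 * r + 3) (hcs : ∀ v, ∃ x, c x = v) (i : ZMod m') :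
    HB (gfam (galeComplex (r + 2) m' N c) (arcSet c (r + 1) i))
      (fun q => if q = 1 then 1 else 0) := by
  refine interval_one (r := r) (t0 := 0) (t1 := 0) (l := fun x => (c x - i).val)
    (fun j _ hj => lab_surj hm hcs i j (by omega)) rfl
    (gfam_interval hm hcs i 0 0 (by omega) _ ?_)
  intro x
  rw [mem_arcSet]
  omega

theorem HB_tau_two (hm : m' = 2 * r + 3) (hcs : ∀ v, ∃ x, c x = v) (i : ZMod m') :
    HB (gfam (galeComplex (r + 2) m' N c) (arcSet c (r + 2) i))
      (fun q => if q = 2 then 1 else 0) := by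
  refine interval_two (r := r) (t0 := 0) (t1 := 1) (l := fun x => (c x - i).val)
    (fun j _ hj => lab_surj hm hcs i j (by omega)) rfl
    (gfam_interval hm hcs i 0 1 (by omega) _ ?_)
  intro x
  rw [mem_arcSet]
  omega

theorem arc_rebase (hm : m' = 2 * r + 3) (i : ZMod m') (t L : ℕ) (hL : t + L < 2 * r + 3)
    (τ : Finset (Fin N))
    (hτ : ∀ x, x ∈ τ ↔ t ≤ (c x - i).val ∧ (c x - i).val < t + L) :
    τ = arcSet c L (i + (t : ZMod m')) := by
  ext x
  rw [hτ, mem_arcSet]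
  have hlt : (c x - i).val < m' := ZMod.val_lt _
  have he : c x - (i + (t : ZMod m')) = (((c x - i).val : ℕ) : ZMod m') - t := by
    rw [ZMod.natCast_zmod_val]; ring
  by_cases h : t ≤ (c x - i).val
  · have : c x - (i + (t : ZMod m')) = (((c x - i).val - t : ℕ) : ZMod m') := by
      rw [he, Nat.cast_sub h]
    rw [this, ZMod.val_natCast_of_lt (by omega)]
    omega
  · have : c x - (i + (t : ZMod m')) = (((c x - i).val + m' - t : ℕ) : ZMod m') := by
      rw [he, Nat.cast_sub (by omega), Nat.cast_add, ZMod.natCast_self, add_zero]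
    rw [this, ZMod.val_natCast_of_lt (by omega)]
    omega

theorem tau_class (hm : m' = 2 * r + 3) (hcs : ∀ v, ∃ x, c x = v) (τ : Finset (Fin N)) :
    τ = ∅ ∨ (∃ i, τ = arcSet c (r + 1) i) ∨ (∃ i, τ = arcSet c (r + 2) i) ∨
      τ = Finset.univ ∨ HB (gfam (galeComplex (r + 2) m' N c) τ) (fun _ => 0) := by
  by_cases h0 : τ = ∅
  · exact Or.inl h0
  by_cases hu : τ = Finset.univ
  · exact Or.inr (Or.inr (Or.inr (Or.inl hu)))
  obtain ⟨y, hy⟩ : ∃ y, y ∉ τ := by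
    by_contra hc
    push Not at hc
    exact hu (Finset.eq_univ_iff_forall.2 hc)
  obtain ⟨x0, hx0⟩ := Finset.nonempty_iff_ne_empty.2 h0
  set i : ZMod m' := c y + 1 with hi
  have hyl : (c y - i).val = 2 * r + 2 := by
    have : c y - i = ((2 * r + 2 : ℕ) : ZMod m') := by
      have e : ((2 * r + 3 : ℕ) : ZMod m') = 0 := by rw [← hm]; exact ZMod.natCast_self _
      have e2 : ((2 * r + 3 : ℕ) : ZMod m') = ((2 * r + 2 : ℕ) : ZMod m') + 1 := by
        push_cast; ring
      rw [e2] at e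
      rw [hi]
      linear_combination -e
    rw [this, ZMod.val_natCast_of_lt (by omega)]
  by_cases hx : ∃ x ∈ τ, ∀ t, t < 2 * r + 3 → (∀ p, inArc r t (c p - i).val → p ∈ τ) →
      ¬ inArc r t (c x - i).val
  · obtain ⟨x, hxτ, hxa⟩ := hx
    right; right; right; right
    refine HB_toggle (gfam_conv hm τ) x (fun w hw => ?_)
    rw [gfam_iff hm i, gfam_iff hm i]
    constructor
    · rintro ⟨a1, a2⟩
      refine ⟨Finset.insert_subset hxτ a1, fun t ht h => ?_⟩
      obtain ⟨p, hp, hp2⟩ := a2 t ht h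
      exact ⟨p, by simp [hp], hp2⟩
    · rintro ⟨a1, a2⟩
      refine ⟨(Finset.subset_insert _ _).trans a1, fun t ht h => ?_⟩
      obtain ⟨p, hp, hp2⟩ := a2 t ht h
      rcases Finset.mem_insert.1 hp with rfl | hp
      · exact absurd hp2 (hxa t ht h)
      · exact ⟨p, hp, hp2⟩
  · push Not at hx
    classical
    -- arcs contained in `τ`
    have hbound : ∀ t, t < 2 * r + 3 → (∀ p, inArc r t (c p - i).val → p ∈ τ) → t ≤ r + 1 := by
      intro t ht h
      by_contra hc
      exact hy (h y (by unfold inArc; omega))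
    set T : Finset ℕ := (Finset.range (2 * r + 3)).filter
      (fun t => ∀ p, inArc r t (c p - i).val → p ∈ τ) with hT
    have hTm : ∀ t, t ∈ T ↔ t < 2 * r + 3 ∧ ∀ p, inArc r t (c p - i).val → p ∈ τ := by
      intro t; simp [hT]
    have hTne : T.Nonempty := by
      obtain ⟨t, ht, h, -⟩ := hx x0 hx0
      exact ⟨t, (hTm t).2 ⟨ht, h⟩⟩
    obtain ⟨t0, ht0, hmin⟩ : ∃ t0 ∈ T, ∀ t ∈ T, t0 ≤ t :=
      ⟨T.min' hTne, T.min'_mem _, fun t ht => T.min'_le t ht⟩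
    obtain ⟨t1, ht1, hmax⟩ : ∃ t1 ∈ T, ∀ t ∈ T, t ≤ t1 :=
      ⟨T.max' hTne, T.max'_mem _, fun t ht => T.le_max' t ht⟩
    have b1 := hbound t1 ((hTm t1).1 ht1).1 ((hTm t1).1 ht1).2
    have h01 := hmin t1 ht1
    have hτ : ∀ x, x ∈ τ ↔ t0 ≤ (c x - i).val ∧ (c x - i).val ≤ t1 + r := by
      intro x
      constructor
      · intro hxτ
        obtain ⟨t, ht, h, ha⟩ := hx x hxτ
        have := hbound t ht h
        have := hmin t ((hTm t).2 ⟨ht, h⟩)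
        have := hmax t ((hTm t).2 ⟨ht, h⟩)
        unfold inArc at ha
        omega
      · rintro ⟨g1, g2⟩
        by_cases hc : (c x - i).val ≤ t0 + r
        · exact ((hTm t0).1 ht0).2 x (by unfold inArc; omega)
        · exact ((hTm t1).1 ht1).2 x (by unfold inArc; omega)
    rcases Nat.lt_or_ge t1 (t0 + 2) with hlt | hge
    · by_cases he : t1 = t0
      · right; left
        refine ⟨_, arc_rebase hm i t0 (r + 1) (by omega) τ (fun x => ?_)⟩
        rw [hτ]; omega
      · right; right; left
        refine ⟨_, arc_rebase hm i t0 (r + 2) (by omega) τ (fun x => ?_)⟩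
        rw [hτ]; omega
    · right; right; right; right
      exact interval_many (r := r) (l := fun x => (c x - i).val)
        (fun j _ hj => lab_surj hm hcs i j (by omega)) hge (by omega)
        (gfam_interval hm hcs i t0 t1 b1 τ hτ)

/-- Contribution of the multidegree `τ`. -/
noncomputable def gbt (c : Fin N → ZMod m') (r : ℕ) (τ : Finset (Fin N)) (q : ℕ) : ℕ :=
  Module.finrank ℚ (gZ (gfam (galeComplex (r + 2) m' N c) τ) q) -
    Module.finrank ℚ (gB (gfam (galeComplex (r + 2) m' N c) τ) q)

theorem gbt_eq {τ : Finset (Fin N)} {b : ℕ → ℕ}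
    (h : HB (gfam (galeComplex (r + 2) m' N c) τ) b) (q : ℕ) : gbt c r τ q = b q := by
  unfold gbt
  rw [h q]; omega

theorem HB_gbt (hm : m' = 2 * r + 3) (τ : Finset (Fin N)) :
    HB (gfam (galeComplex (r + 2) m' N c) τ) (gbt c r τ) := by
  intro q
  unfold gbt
  have := Submodule.finrank_mono (gB_le_gZ (gfam_conv (c := c) hm τ) q)
  omega

theorem betti_sum (hm : m' = 2 * r + 3) (_hcs : ∀ v, ∃ x, c x = v) (q p : ℕ) :
    bettiNum N (galeComplex (r + 2) m' N c) q p =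
      ∑ τ ∈ Finset.univ.filter (fun τ : Finset (Fin N) => τ.card = p), gbt c r τ q := by
  unfold bettiNum
  exact Finset.sum_congr rfl (fun τ _ => betti_term (gfam_conv hm τ) (HB_gbt hm τ) q)

open Classical in
theorem gbt_ite (hm : m' = 2 * r + 3) (hcs : ∀ v, ∃ x, c x = v) (τ : Finset (Fin N)) (q : ℕ) :
    gbt c r τ q = if (q = 0 ∧ τ = ∅) ∨ (q = 1 ∧ ∃ i, τ = arcSet c (r + 1) i) ∨
      (q = 2 ∧ ∃ i, τ = arcSet c (r + 2) i) ∨ (q = 3 ∧ τ = Finset.univ) then 1 else 0 := by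
  have e0 : τ = ∅ → gbt c r τ = fun q => if q = 0 then 1 else 0 := by
    rintro rfl; funext q; exact gbt_eq (HB_tau_empty hm hcs) q
  have e1 : (∃ i, τ = arcSet c (r + 1) i) → gbt c r τ = fun q => if q = 1 then 1 else 0 := by
    rintro ⟨i, rfl⟩; funext q; exact gbt_eq (HB_tau_one hm hcs i) q
  have e2 : (∃ i, τ = arcSet c (r + 2) i) → gbt c r τ = fun q => if q = 2 then 1 else 0 := by
    rintro ⟨i, rfl⟩; funext q; exact gbt_eq (HB_tau_two hm hcs i) q
  have e3 : τ = Finset.univ → gbt c r τ = fun q => if q = 3 then 1 else 0 := by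
    rintro rfl; funext q; exact gbt_eq (HB_tau_univ hm hcs) q
  split_ifs with h
  · rcases h with ⟨rfl, h⟩ | ⟨rfl, h⟩ | ⟨rfl, h⟩ | ⟨rfl, h⟩
    · rw [e0 h]; rfl
    · rw [e1 h]; rfl
    · rw [e2 h]; rfl
    · rw [e3 h]; rfl
  · push Not at h
    obtain ⟨h0, h1, h2, h3⟩ := h
    rcases tau_class hm hcs τ with g | g | g | g | g
    · rw [e0 g]; simp only; rw [if_neg]; intro hq; exact (h0 hq).ne_empty g
    · rw [e1 g]; simp only; rw [if_neg]; intro hq; obtain ⟨i, hi⟩ := g; exact h1 hq i hi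
    · rw [e2 g]; simp only; rw [if_neg]; intro hq; obtain ⟨i, hi⟩ := g; exact h2 hq i hi
    · rw [e3 g]; simp only; rw [if_neg]; intro hq; exact h3 hq g
    · exact gbt_eq g q

theorem arcSet_inj (hm : m' = 2 * r + 3) (hcs : ∀ v, ∃ x, c x = v) (L : ℕ) (hL0 : 0 < L)
    (hL : L < m') : Function.Injective (arcSet c L) := by
  intro i j hij
  by_contra hne
  obtain ⟨x, hx⟩ := hcs j
  obtain ⟨y, hy⟩ := hcs (j - 1)
  have x1 : x ∈ arcSet c L j := by rw [mem_arcSet, hx, sub_self, ZMod.val_zero]; exact hL0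
  have x2 : (j - i).val < L := by rw [← hij, mem_arcSet, hx] at x1; exact x1
  have x0 : (j - i).val ≠ 0 := by
    rw [Ne, ZMod.val_eq_zero, sub_eq_zero]; exact fun h => hne h.symm
  have y1 : y ∈ arcSet c L i := by
    rw [mem_arcSet, hy]
    have : j - 1 - i = (((j - i).val - 1 : ℕ) : ZMod m') := by
      rw [Nat.cast_sub (by omega), ZMod.natCast_zmod_val]; push_cast; ring
    rw [this, ZMod.val_natCast_of_lt (by omega)]
    omega
  rw [hij, mem_arcSet, hy] at y1
  have : j - 1 - j = ((m' - 1 : ℕ) : ZMod m') := by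
    rw [Nat.cast_sub (by omega), ZMod.natCast_self]; push_cast; ring
  rw [this, ZMod.val_natCast_of_lt (by omega)] at y1
  omega

theorem arcSet_card (a : ZMod m' → ℕ)
    (hc : ∀ i : ZMod m', (Finset.univ.filter (fun x => c x = i)).card = a i)
    (L : ℕ) (hL : L ≤ m') (i : ZMod m') :
    (arcSet c L i).card = ∑ t ∈ Finset.range L, a (i + (t : ZMod m')) := by
  rw [Finset.card_eq_sum_card_fiberwise (f := fun x => (c x - i).val) (t := Finset.range L)]
  · refine Finset.sum_congr rfl (fun t ht => ?_)
    rw [← hc]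
    congr 1
    ext x
    simp only [Finset.mem_filter, mem_arcSet, Finset.mem_univ, true_and]
    have ht' := Finset.mem_range.1 ht
    constructor
    · rintro ⟨-, rfl⟩
      rw [ZMod.natCast_zmod_val]; ring
    · intro h
      have : (c x - i).val = t := by
        rw [h, add_sub_cancel_left, ZMod.val_natCast_of_lt (by omega)]
      omega
  · intro x hx
    simpa [mem_arcSet] using hx

theorem betti_arc (hm : m' = 2 * r + 3) (hcs : ∀ v, ∃ x, c x = v) (a : ZMod m' → ℕ)
    (hc : ∀ i : ZMod m', (Finset.univ.filter (fun x => c x = i)).card = a i)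
    (L q : ℕ) (hL0 : 0 < L) (hL : L < m')
    (hq : ∀ τ, gbt c r τ q = 1 ∧ (∃ i, arcSet c L i = τ) ∨
      gbt c r τ q = 0 ∧ ¬ (∃ i, arcSet c L i = τ)) (j : ℕ) :
    bettiNum N (galeComplex (r + 2) m' N c) q j =
      (Finset.univ.filter (fun i : ZMod m' =>
        (∑ t ∈ Finset.range L, a (i + (t : ZMod m'))) = j)).card := by
  classical
  have e : ∀ τ, gbt c r τ q = if (∃ i, arcSet c L i = τ) then 1 else 0 := by
    intro τ
    rcases hq τ with h | h
    · rw [if_pos h.2, h.1]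
    · rw [if_neg h.2, h.1]
  rw [betti_sum hm hcs]
  simp only [e]
  rw [← Finset.sum_filter, Finset.sum_const, smul_eq_mul, mul_one, Finset.filter_filter,
    ← Finset.card_image_of_injective _ (arcSet_inj hm hcs L hL0 hL)]
  congr 1
  ext τ
  simp only [Finset.mem_filter, Finset.mem_univ, true_and, Finset.mem_image]
  constructor
  · rintro ⟨h, i, rfl⟩
    exact ⟨i, by rw [← arcSet_card a hc L hL.le, h], rfl⟩
  · rintro ⟨i, h, rfl⟩
    exact ⟨by rw [arcSet_card a hc L hL.le, h], i, rfl⟩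

end GaleFinal
/-- Bigraded Betti numbers of the moment-angle manifold of `P = P_{a₁,...,a_{2k-1}}`:
`β^{0,0} = 1`; `β^{-1,2j} = #{i : aᵢ + ⋯ + a_{i+k-2} = j}`;
`β^{-2,2j} = #{i : aᵢ + ⋯ + a_{i+k-1} = j}`; `β^{-3,2(n+3)} = 1`; all others vanish.
In particular `∑ⱼ β^{-1,2j} = ∑ⱼ β^{-2,2j} = 2k - 1`. -/
theorem bigraded_betti_numbers_of_n_plus_three_facets (k m' : ℕ) [NeZero m']
    (hk : 2 ≤ k) (hm : m' = 2 * k - 1) (a : ZMod m' → ℕ) (ha : ∀ i, 1 ≤ a i)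
    (n N : ℕ) (hN : N = n + 3) (hn : n + 3 = ∑ i, a i)
    (c : Fin N → ZMod m')
    (hc : ∀ i : ZMod m', (Finset.univ.filter (fun x => c x = i)).card = a i) :
    bettiNum N (galeComplex k m' N c) 0 0 = 1 ∧
    (∀ j : ℕ, bettiNum N (galeComplex k m' N c) 1 j =
      (Finset.univ.filter (fun i : ZMod m' =>
        (∑ t ∈ Finset.range (k - 1), a (i + (t : ZMod m'))) = j)).card) ∧
    (∀ j : ℕ, bettiNum N (galeComplex k m' N c) 2 j =
      (Finset.univ.filter (fun i : ZMod m' =>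
        (∑ t ∈ Finset.range k, a (i + (t : ZMod m'))) = j)).card) ∧
    bettiNum N (galeComplex k m' N c) 3 (n + 3) = 1 ∧
    (∀ q p : ℕ, q ≠ 1 → q ≠ 2 → (q, p) ≠ (0, 0) → (q, p) ≠ (3, n + 3) →
      bettiNum N (galeComplex k m' N c) q p = 0) ∧
    (∑ j ∈ Finset.range (n + 4), bettiNum N (galeComplex k m' N c) 1 j) = 2 * k - 1 ∧
    (∑ j ∈ Finset.range (n + 4), bettiNum N (galeComplex k m' N c) 2 j) = 2 * k - 1 := by
  obtain ⟨r, rfl⟩ : ∃ r, k = r + 2 := ⟨k - 2, by omega⟩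
  have hm3 : m' = 2 * r + 3 := by omega
  have hcs : ∀ v, ∃ x, c x = v := by
    intro v
    have h1 := ha v
    rw [← hc v, Nat.one_le_iff_ne_zero, ← Nat.pos_iff_ne_zero, Finset.card_pos] at h1
    obtain ⟨x, hx⟩ := h1
    exact ⟨x, by simpa using hx⟩
  have hb1 := betti_arc hm3 hcs a hc (r + 1) 1 (by omega) (by omega) (fun τ => by
    rw [gbt_ite hm3 hcs]
    by_cases h : ∃ i, τ = arcSet c (r + 1) i
    · obtain ⟨i, rfl⟩ := h
      left; simp
    · right
      refine ⟨by rw [if_neg]; simp; simpa using h, ?_⟩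
      rintro ⟨i, hi⟩
      exact h ⟨i, hi.symm⟩)
  have hb2 := betti_arc hm3 hcs a hc (r + 2) 2 (by omega) (by omega) (fun τ => by
    rw [gbt_ite hm3 hcs]
    by_cases h : ∃ i, τ = arcSet c (r + 2) i
    · obtain ⟨i, rfl⟩ := h
      left; simp
    · right
      refine ⟨by rw [if_neg]; simp; simpa using h, ?_⟩
      rintro ⟨i, hi⟩
      exact h ⟨i, hi.symm⟩)
  have htot : ∀ L, L ≤ m' → (∑ j ∈ Finset.range (n + 4), (Finset.univ.filter (fun i : ZMod m' =>
      (∑ t ∈ Finset.range L, a (i + (t : ZMod m'))) = j)).card) = 2 * (r + 2) - 1 := by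
    intro L hL
    rw [← Finset.card_eq_sum_card_fiberwise, Finset.card_univ, ZMod.card, hm]
    intro i _
    rw [Finset.coe_range, Set.mem_Iio]
    have h5 := arcSet_card a hc L hL i
    simp only
    have := Finset.card_le_univ (arcSet c L i)
    rw [Fintype.card_fin] at this
    omega
  refine ⟨?_, hb1, hb2, ?_, ?_, ?_, ?_⟩
  · rw [betti_sum hm3 hcs, Finset.sum_eq_single_of_mem ∅ (by simp), gbt_ite hm3 hcs]
    · simp
    · intro τ hτ h
      exact absurd (by simpa using hτ) h
  · rw [betti_sum hm3 hcs, Finset.sum_eq_single_of_mem Finset.univ (by simp [hN]),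
      gbt_ite hm3 hcs]
    · simp
    · intro τ hτ h
      refine absurd ?_ h
      rw [← Finset.card_eq_iff_eq_univ, Fintype.card_fin]
      have h6 : τ.card = n + 3 := by simpa using hτ
      omega
  · intro q p h1 h2 h0 h3
    rw [betti_sum hm3 hcs]
    refine Finset.sum_eq_zero (fun τ hτ => ?_)
    have hp : τ.card = p := by simpa using hτ
    rw [gbt_ite hm3 hcs, if_neg]
    rintro (⟨rfl, rfl⟩ | ⟨h, -⟩ | ⟨h, -⟩ | ⟨rfl, rfl⟩)
    · apply h0; rw [← hp]; rfl
    · exact h1 h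
    · exact h2 h
    · apply h3; rw [← hp, Finset.card_univ, Fintype.card_fin, hN]
  · rw [← htot (r + 1) (by omega)]
    exact Finset.sum_congr rfl (fun j _ => hb1 j)
  · rw [← htot (r + 2) (by omega)]
    exact Finset.sum_congr rfl (fun j _ => hb2 j)
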